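/- The group of 8×8 integer matrices generated by B (rows (2,-1,-1,-1,0,0,0,1), (1,0,-1,-1,0,0,0,1), (1,-1,0,-1,0,0,0,1), (1,-1,-1,0,0,0,0,1), (0,0,0,0,1,0,0,0), (0,0,0,0,0,1,0,0), (0,0,0,0,0,0,1,0), (0,0,0,0,0,0,0,1)) and the five permutation matrices S₁,…,S₅ (Sₖ swaps coordinates k+1 and k+2) is isomorphic to the Weyl group W(E₆), of order 51840. -/

import Mathlib

/-- The 8×8 permutation matrix swapping coordinates `k` and `l` (0-indexed). -/
def swapMatrix8 (k : Fin 8) (l : Fin 8) : Matrix (Fin 8) (Fin 8) ℤ :=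
  fun i j => if (Equiv.swap k l) i = j then 1 else 0

/-!
Each generator is a reflection `v ↦ v - φᵢ(v) αᵢ` of `ℤ⁸`, and the pairings `φᵢ(αⱼ)` form the Cartan
matrix of `E₆`, so `W(E₆)` acts on `ℤ⁸` through the given matrices. By an argument of Tits, `w` maps
the fundamental chamber into the half-space `φᵢ ≥ 0` whenever `ℓ(sᵢ w) > ℓ(w)`; it follows that the
stabilizer of a point of the chamber is generated by the simple reflections fixing that point.
For a point in the interior of the chamber this says that the action is faithful. For the
fundamental weights it lets the orbit-stabilizer theorem descend the chain
`E₆ ⊃ D₅ ⊃ A₄ ⊃ A₃ ⊃ A₂ ⊃ A₁`, whose orbits have sizes `27, 16, 5, 4, 3, 2`, with product `51840`.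
-/

open Module MulAction
open scoped Pointwise

section Coxeter

variable {B W : Type*} [Group W] {M : CoxeterMatrix B} (cs : CoxeterSystem M W)

theorem simple_mul_simple_comm {i j : B} (h : M i j = 2) :
    cs.simple i * cs.simple j = cs.simple j * cs.simple i := by
  simpa [CoxeterSystem.braidWord, CoxeterSystem.alternatingWord, M.symmetric j i, h,
    CoxeterSystem.wordProd] using cs.wordProd_braidWord_eq i j

theorem simple_mul_simple_mul_simple {i j : B} (h : M i j = 3) :
    cs.simple i * cs.simple j * cs.simple i = cs.simple j * cs.simple i * cs.simple j := by
  simpa [CoxeterSystem.braidWord, CoxeterSystem.alternatingWord, M.symmetric j i, h,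
    CoxeterSystem.wordProd, mul_assoc] using (cs.wordProd_braidWord_eq i j).symm

theorem exists_eq_simple_mul_of_isLeftDescent {w : W} {i : B} (h : cs.IsLeftDescent w i) :
    ∃ u, w = cs.simple i * u ∧ cs.length u < cs.length w ∧ ¬ cs.IsLeftDescent u i :=
  ⟨cs.simple i * w, by simp, h, cs.isLeftDescent_iff_not_isLeftDescent_mul.1 h⟩

theorem not_isLeftDescent_of_comm {i j : B} (h : M i j = 2) {u : W}
    (hj : ¬ cs.IsLeftDescent u j) (hi : ¬ cs.IsLeftDescent (cs.simple j * u) i) :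
    ¬ cs.IsLeftDescent u i := by
  rw [cs.not_isLeftDescent_iff] at hi hj
  rw [← mul_assoc, simple_mul_simple_comm cs h, mul_assoc] at hi
  have := cs.length_simple_mul (cs.simple i * u) j
  unfold CoxeterSystem.IsLeftDescent
  lia

theorem not_isLeftDescent_of_braid {i j : B} (h : M i j = 3) {u : W}
    (hi : ¬ cs.IsLeftDescent u i) (hj : ¬ cs.IsLeftDescent (cs.simple i * u) j)
    (hi' : ¬ cs.IsLeftDescent (cs.simple j * (cs.simple i * u)) i) :
    ¬ cs.IsLeftDescent u j := by
  rw [cs.not_isLeftDescent_iff] at hi hj hi'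
  rw [← mul_assoc, ← mul_assoc, simple_mul_simple_mul_simple cs h, mul_assoc, mul_assoc] at hi'
  have := cs.length_simple_mul (cs.simple i * (cs.simple j * u)) j
  have := cs.length_simple_mul (cs.simple j * u) i
  unfold CoxeterSystem.IsLeftDescent
  lia

theorem nonempty_closure_range_simple_mulEquiv {N : Type*} [Monoid N] {f : W →* N}
    (hf : Function.Injective f) :
    Nonempty (Submonoid.closure (Set.range (f ∘ cs.simple)) ≃* W) := by
  rw [Set.range_comp, ← MonoidHom.map_mclosure, cs.submonoid_closure_range_simple]
  exact ⟨((Submonoid.equivMapOfInjective ⊤ f hf).symm).trans Submonoid.topEquiv⟩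

end Coxeter

section OrbitSweep

variable {ι G α : Type*} [Group G] [MulAction G α]

theorem orbit_subset_of_forall_smul_mem {S : Set G} {T : Finset α} {x : α} (hx : x ∈ T)
    (hT : ∀ g ∈ S, ∀ y ∈ T, g • y ∈ T) : orbit (Subgroup.closure S) x ⊆ T := by
  classical
  have hle : Subgroup.closure S ≤ stabilizer G T :=
    (Subgroup.closure_le _).2 fun g hg => mem_stabilizer_finset'.2 fun y hy => hT g hg y hy
  rintro _ ⟨g, rfl⟩
  exact mem_stabilizer_finset'.1 (hle g.2) hx

variable [DecidableEq α] (r : ι → G)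

/-- The points `r i₁ ⋯ r iₘ • x`, where `i₁, …, iₘ` runs over the sublists of `l`. When the `r i`
are the simple reflections of a finite Coxeter group and `x` is a dominant vector, the subword
property of the Bruhat order makes this the whole orbit of `x` as soon as `l` is a reduced word of
the longest minimal representative of the cosets of the stabilizer of `x`. -/
def orbitSweep (l : List ι) (x : α) : Finset α :=
  l.foldr (fun i T => T ∪ T.image (r i • ·)) {x}

variable {r}

theorem mem_orbitSweep_self (l : List ι) (x : α) : x ∈ orbitSweep r l x := by
  induction l with
  | nil => exact Finset.mem_singleton_self x
  | cons i l ih => exact Finset.mem_union_left _ ih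

theorem orbitSweep_subset_orbit {l : List ι} {J : Set ι} (hl : ∀ i ∈ l, i ∈ J) (x : α) :
    (orbitSweep r l x : Set α) ⊆ orbit (Subgroup.closure (r '' J)) x := by
  induction l with
  | nil => simp [orbitSweep]
  | cons i l ih =>
    obtain ⟨hi, hl⟩ := List.forall_mem_cons.1 hl
    let g : Subgroup.closure (r '' J) := ⟨r i, Subgroup.subset_closure (Set.mem_image_of_mem r hi)⟩
    simp only [orbitSweep, List.foldr_cons, Finset.coe_union, Finset.coe_image,
      Set.union_subset_iff, Set.image_subset_iff]
    exact ⟨ih hl, fun y hy => mem_orbit_of_mem_orbit g (ih hl hy)⟩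

theorem ncard_orbit_eq_card_orbitSweep {l : List ι} {J : Finset ι} {x : α} (hl : ∀ i ∈ l, i ∈ J)
    (hT : ∀ i ∈ J, ∀ y ∈ orbitSweep r l x, r i • y ∈ orbitSweep r l x) :
    (orbit (Subgroup.closure (r '' J)) x).ncard = (orbitSweep r l x).card := by
  rw [← Set.ncard_coe_finset]
  congr 1
  refine (orbit_subset_of_forall_smul_mem (mem_orbitSweep_self l x) ?_).antisymm
    (orbitSweep_subset_orbit hl x)
  rintro _ ⟨i, hi, rfl⟩
  exact hT i hi

end OrbitSweep

/-- A family of roots in a module `V` and of coroots in its dual whose pairings are the entries of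
the Cartan matrix of a simply laced Coxeter matrix `M`: all off-diagonal entries of `M` are `2` or
`3`, and the corresponding pairings are `0` or `-1`. Neither family need be a basis. -/
structure SimplyLacedRealization {B : Type*} (M : CoxeterMatrix B) (R V : Type*) [CommRing R]
    [AddCommGroup V] [Module R V] where
  root : B → V
  coroot : B → Dual R V
  coroot_root_self (i : B) : coroot i (root i) = 2
  coroot_root_of_ne (i j : B) (h : i ≠ j) :
    M i j = 2 ∧ coroot i (root j) = 0 ∨ M i j = 3 ∧ coroot i (root j) = -1

namespace SimplyLacedRealization

section CommRing

variable {B R V W : Type*} [CommRing R] [AddCommGroup V] [Module R V] [Group W]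
  {M : CoxeterMatrix B} (ℛ : SimplyLacedRealization M R V) (cs : CoxeterSystem M W)

theorem coroot_root_eq_zero {i j : B} (h : M i j = 2) : ℛ.coroot i (ℛ.root j) = 0 := by
  have hij : i ≠ j := by rintro rfl; simp at h
  have := ℛ.coroot_root_of_ne i j hij
  lia

theorem coroot_root_eq_neg_one {i j : B} (h : M i j = 3) : ℛ.coroot i (ℛ.root j) = -1 := by
  have hij : i ≠ j := by rintro rfl; simp at h
  have := ℛ.coroot_root_of_ne i j hij
  lia

/-- The simple reflection `v ↦ v - ⟨v, coroot i⟩ root i`. -/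
def reflection (i : B) : V ≃ₗ[R] V := Module.reflection (ℛ.coroot_root_self i)

theorem reflection_apply (i : B) (v : V) :
    ℛ.reflection i v = v - ℛ.coroot i v • ℛ.root i := Module.reflection_apply _ _

theorem coroot_reflection_self (i : B) (v : V) :
    ℛ.coroot i (ℛ.reflection i v) = -ℛ.coroot i v := by
  simp only [reflection_apply, map_sub, map_smul, coroot_root_self, smul_eq_mul]
  ring

theorem coroot_reflection_of_eq_two {i j : B} (h : M i j = 2) (v : V) :
    ℛ.coroot i (ℛ.reflection j v) = ℛ.coroot i v := by
  simp [reflection_apply, ℛ.coroot_root_eq_zero h]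

theorem coroot_reflection_of_eq_three {i j : B} (h : M i j = 3) (v : V) :
    ℛ.coroot i (ℛ.reflection j v) = ℛ.coroot i v + ℛ.coroot j v := by
  simp [reflection_apply, ℛ.coroot_root_eq_neg_one h]

theorem coroot_reflection_reflection {i j : B} (h : M i j = 3) (v : V) :
    ℛ.coroot i (ℛ.reflection j (ℛ.reflection i v)) = ℛ.coroot j v := by
  rw [ℛ.coroot_reflection_of_eq_three h, ℛ.coroot_reflection_self,
    ℛ.coroot_reflection_of_eq_three (M.symmetric i j ▸ h), neg_add_cancel_comm_assoc]

theorem reflection_eq_self {i : B} {v : V} (h : ℛ.coroot i v = 0) : ℛ.reflection i v = v := by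
  rw [reflection_apply, h, zero_smul, sub_zero]

theorem reflection_mul_self (i : B) : ℛ.reflection i * ℛ.reflection i = 1 :=
  LinearEquiv.ext (involutive_reflection (ℛ.coroot_root_self i))

theorem isLiftable_reflection : M.IsLiftable ℛ.reflection := by
  intro i j
  obtain rfl | hij := eq_or_ne i j
  · rw [M.diagonal, pow_one, reflection_mul_self]
  ext v
  obtain ⟨h, hc⟩ | ⟨h, hc⟩ := ℛ.coroot_root_of_ne i j hij
  · have hc' := ℛ.coroot_root_eq_zero (M.symmetric i j ▸ h)
    simp only [h, pow_two, LinearEquiv.mul_apply, LinearEquiv.coe_one, id_eq, reflection_apply,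
      map_sub, map_smul, coroot_root_self, hc, hc']
    module
  · have hc' := ℛ.coroot_root_eq_neg_one (M.symmetric i j ▸ h)
    simp only [h, pow_three, LinearEquiv.mul_apply, LinearEquiv.coe_one, id_eq, reflection_apply,
      map_sub, map_smul, coroot_root_self, hc, hc']
    module

/-- The action on `V` of a Coxeter group of type `M` through the simple reflections. -/
noncomputable def rep : W →* V ≃ₗ[R] V := cs.lift ⟨ℛ.reflection, ℛ.isLiftable_reflection⟩

@[simp]
theorem rep_simple (i : B) : ℛ.rep cs (cs.simple i) = ℛ.reflection i :=
  cs.lift_apply_simple ℛ.isLiftable_reflection i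

/-- The standard parabolic subgroup of type `J`, taken inside the linear automorphisms of `V`. -/
def parabolic (J : Set B) : Subgroup (V ≃ₗ[R] V) := Subgroup.closure (ℛ.reflection '' J)

theorem parabolic_empty : ℛ.parabolic ∅ = ⊥ := by
  rw [parabolic, Set.image_empty, Subgroup.closure_empty]

theorem parabolic_mono {J K : Set B} (h : J ⊆ K) : ℛ.parabolic J ≤ ℛ.parabolic K :=
  Subgroup.closure_mono (Set.image_mono h)

theorem map_rep_closure_simple (J : Set B) :
    (Subgroup.closure (cs.simple '' J)).map (ℛ.rep cs) = ℛ.parabolic J := by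
  rw [MonoidHom.map_closure, Set.image_image]
  simp only [rep_simple, parabolic]

theorem parabolic_univ : ℛ.parabolic Set.univ = (ℛ.rep cs).range := by
  rw [← ℛ.map_rep_closure_simple cs, Set.image_univ, cs.subgroup_closure_range_simple,
    ← MonoidHom.range_eq_map]

end CommRing

section Ordered

variable {B R V W : Type*} [CommRing R] [PartialOrder R] [IsOrderedRing R] [AddCommGroup V]
  [Module R V] [Group W] {M : CoxeterMatrix B} (ℛ : SimplyLacedRealization M R V)
  (cs : CoxeterSystem M W)

/-- The closed fundamental chamber, i.e. the set of dominant vectors. -/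
def chamber : Set V := {v | ∀ i, 0 ≤ ℛ.coroot i v}

theorem coroot_rep_nonneg {v : V} (hv : v ∈ ℛ.chamber) {w : W} {i : B}
    (hi : ¬ cs.IsLeftDescent w i) : 0 ≤ ℛ.coroot i (ℛ.rep cs w v) := by
  induction hn : cs.length w using Nat.strong_induction_on generalizing w i with
  | _ n ih =>
  obtain rfl | hw := eq_or_ne w 1
  · simpa using hv i
  obtain ⟨j, hj⟩ := cs.exists_leftDescent_of_ne_one hw
  have hij : i ≠ j := by rintro rfl; exact hi hj
  obtain ⟨u, rfl, hlt, hju⟩ := exists_eq_simple_mul_of_isLeftDescent cs hj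
  rw [map_mul, rep_simple, LinearEquiv.mul_apply]
  obtain ⟨hM, -⟩ | ⟨hM, -⟩ := ℛ.coroot_root_of_ne i j hij
  · rw [ℛ.coroot_reflection_of_eq_two hM]
    exact ih _ (hn ▸ hlt) (not_isLeftDescent_of_comm cs hM hju hi) rfl
  by_cases hiu : cs.IsLeftDescent u i
  · obtain ⟨u, rfl, hlt', hiu'⟩ := exists_eq_simple_mul_of_isLeftDescent cs hiu
    rw [map_mul, rep_simple, LinearEquiv.mul_apply, ℛ.coroot_reflection_reflection hM]
    exact ih _ (hn ▸ hlt'.trans hlt) (not_isLeftDescent_of_braid cs hM hiu' hju hi) rfl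
  · rw [ℛ.coroot_reflection_of_eq_three hM]
    exact add_nonneg (ih _ (hn ▸ hlt) hiu rfl) (ih _ (hn ▸ hlt) hju rfl)

theorem mem_closure_simple_of_rep_eq_self {v : V} (hv : v ∈ ℛ.chamber) {w : W}
    (hw : ℛ.rep cs w v = v) :
    w ∈ Subgroup.closure (cs.simple '' {i | ℛ.coroot i v = 0}) := by
  induction hn : cs.length w using Nat.strong_induction_on generalizing w with
  | _ n ih =>
  obtain rfl | hne := eq_or_ne w 1
  · exact one_mem _
  obtain ⟨j, hj⟩ := cs.exists_leftDescent_of_ne_one hne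
  obtain ⟨u, rfl, hlt, hju⟩ := exists_eq_simple_mul_of_isLeftDescent cs hj
  rw [map_mul, rep_simple, LinearEquiv.mul_apply] at hw
  have hneg : ℛ.coroot j v = -ℛ.coroot j (ℛ.rep cs u v) := by
    rw [← coroot_reflection_self, hw]
  have hzero : ℛ.coroot j v = 0 :=
    le_antisymm (hneg ▸ neg_nonpos.2 (ℛ.coroot_rep_nonneg cs hv hju)) (hv j)
  have hu : ℛ.rep cs u v = v := by
    rwa [ℛ.reflection_eq_self (neg_eq_zero.1 (hneg ▸ hzero))] at hw
  exact mul_mem (Subgroup.subset_closure (Set.mem_image_of_mem _ hzero)) (ih _ (hn ▸ hlt) hu rfl)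

theorem rep_injective {v : V} (hv : ∀ i, 0 < ℛ.coroot i v) : Function.Injective (ℛ.rep cs) := by
  refine (injective_iff_map_eq_one _).2 fun w hw => ?_
  have hmem := ℛ.mem_closure_simple_of_rep_eq_self cs (fun i => (hv i).le)
    (show ℛ.rep cs w v = v by simp [hw])
  simpa [fun i => (hv i).ne'] using hmem

theorem mem_parabolic_of_apply_eq_self {v : V} (hv : v ∈ ℛ.chamber) {g : V ≃ₗ[R] V}
    (hg : g ∈ ℛ.parabolic Set.univ) (h : g v = v) :
    g ∈ ℛ.parabolic {i | ℛ.coroot i v = 0} := by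
  rw [ℛ.parabolic_univ M.toCoxeterSystem] at hg
  obtain ⟨w, rfl⟩ := hg
  rw [← ℛ.map_rep_closure_simple M.toCoxeterSystem]
  exact Subgroup.mem_map_of_mem _ (ℛ.mem_closure_simple_of_rep_eq_self _ hv h)

end Ordered

section Weights

variable {B R V : Type*} [DecidableEq B] [CommRing R] [AddCommGroup V] [Module R V]
  {M : CoxeterMatrix B} (ℛ : SimplyLacedRealization M R V)

/-- The vectors `ϖ j` are fundamental weights, i.e. they are dual to the coroots. -/
def IsFundamentalWeights (ϖ : B → V) : Prop :=
  ∀ i j, ℛ.coroot i (ϖ j) = if i = j then 1 else 0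

variable {ℛ} {ϖ : B → V}

theorem IsFundamentalWeights.coroot_sum (hϖ : ℛ.IsFundamentalWeights ϖ) (s : Finset B) (i : B) :
    ℛ.coroot i (∑ j ∈ s, ϖ j) = if i ∈ s then 1 else 0 := by
  simp only [map_sum, hϖ i, Finset.sum_ite_eq]

theorem IsFundamentalWeights.apply_eq_self (hϖ : ℛ.IsFundamentalWeights ϖ) {J : Set B}
    {g : V ≃ₗ[R] V} (hg : g ∈ ℛ.parabolic J) {k : B} (hk : k ∉ J) : g (ϖ k) = ϖ k := by
  suffices ℛ.parabolic J ≤ stabilizer (V ≃ₗ[R] V) (ϖ k) from this hg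
  refine (Subgroup.closure_le _).2 ?_
  rintro _ ⟨i, hi, rfl⟩
  exact ℛ.reflection_eq_self (by rw [hϖ, if_neg (ne_of_mem_of_not_mem hi hk)])

variable [PartialOrder R] [IsStrictOrderedRing R] [Finite B]

theorem IsFundamentalWeights.mem_parabolic_iff (hϖ : ℛ.IsFundamentalWeights ϖ) {J : Finset B}
    {g : V ≃ₗ[R] V} (hg : g ∈ ℛ.parabolic Set.univ) :
    g ∈ ℛ.parabolic J ↔ ∀ k ∉ J, g (ϖ k) = ϖ k := by
  cases nonempty_fintype B
  refine ⟨fun h k hk => hϖ.apply_eq_self h hk, fun h => ?_⟩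
  have hv : ∑ k ∈ Jᶜ, ϖ k ∈ ℛ.chamber := fun i => by rw [hϖ.coroot_sum]; positivity
  have hfix : g (∑ k ∈ Jᶜ, ϖ k) = ∑ k ∈ Jᶜ, ϖ k := by
    rw [map_sum]
    exact Finset.sum_congr rfl fun k hk => h k (Finset.mem_compl.1 hk)
  simpa [hϖ.coroot_sum] using ℛ.mem_parabolic_of_apply_eq_self hv hg hfix

theorem IsFundamentalWeights.stabilizer_parabolic_insert (hϖ : ℛ.IsFundamentalWeights ϖ)
    {J : Finset B} {k : B} (hk : k ∉ J) :
    stabilizer (ℛ.parabolic (insert k J : Finset B)) (ϖ k) =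
      (ℛ.parabolic J).subgroupOf (ℛ.parabolic (insert k J : Finset B)) := by
  ext ⟨g, hg⟩
  have huniv : g ∈ ℛ.parabolic Set.univ := ℛ.parabolic_mono (Set.subset_univ _) hg
  have hfix := (hϖ.mem_parabolic_iff huniv).1 hg
  rw [Subgroup.mem_subgroupOf, hϖ.mem_parabolic_iff huniv]
  refine ⟨fun hgk j hj => ?_, fun h => h k hk⟩
  obtain rfl | hjk := eq_or_ne j k
  · exact hgk
  · exact hfix j (Finset.mem_insert.not.2 (not_or.2 ⟨hjk, hj⟩))

theorem IsFundamentalWeights.card_parabolic_insert (hϖ : ℛ.IsFundamentalWeights ϖ)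
    {J : Finset B} {k : B} (hk : k ∉ J) :
    Nat.card (ℛ.parabolic (insert k J : Finset B)) =
      (orbit (ℛ.parabolic (insert k J : Finset B)) (ϖ k)).ncard * Nat.card (ℛ.parabolic J) := by
  have hle : ℛ.parabolic J ≤ ℛ.parabolic (insert k J : Finset B) :=
    ℛ.parabolic_mono (Finset.coe_subset.2 (Finset.subset_insert k J))
  rw [← Subgroup.index_mul_card (stabilizer _ (ϖ k)), index_stabilizer,
    hϖ.stabilizer_parabolic_insert hk, Nat.card_congr (Subgroup.subgroupOfEquivOfLe hle).toEquiv]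

theorem IsFundamentalWeights.rep_injective (hϖ : ℛ.IsFundamentalWeights ϖ) {W : Type*}
    [Group W] (cs : CoxeterSystem M W) :
    Function.Injective (ℛ.rep cs) := by
  cases nonempty_fintype B
  exact ℛ.rep_injective cs (v := ∑ k, ϖ k) fun i => by simp [hϖ.coroot_sum]

theorem IsFundamentalWeights.card_eq_card_parabolic (hϖ : ℛ.IsFundamentalWeights ϖ) {W : Type*}
    [Group W] (cs : CoxeterSystem M W) : Nat.card W = Nat.card (ℛ.parabolic Set.univ) := by
  rw [ℛ.parabolic_univ cs]
  exact Nat.card_congr (MonoidHom.ofInjective (hϖ.rep_injective cs)).toEquiv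

theorem IsFundamentalWeights.card_parabolic_insert_of_orbitSweep [DecidableEq V]
    (hϖ : ℛ.IsFundamentalWeights ϖ) {J : Finset B} {k : B} (hk : k ∉ J) {l : List B}
    (hl : ∀ i ∈ l, i ∈ insert k J)
    (hT : ∀ i ∈ insert k J, ∀ v ∈ orbitSweep ℛ.reflection l (ϖ k),
      ℛ.reflection i • v ∈ orbitSweep ℛ.reflection l (ϖ k)) :
    Nat.card (ℛ.parabolic (insert k J : Finset B)) =
      (orbitSweep ℛ.reflection l (ϖ k)).card * Nat.card (ℛ.parabolic J) := by
  rw [hϖ.card_parabolic_insert hk, parabolic, ncard_orbit_eq_card_orbitSweep hl hT]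

end Weights

end SimplyLacedRealization

section Bailey

/-- The vectors `αᵢ` for which the generators act by `v ↦ v - φᵢ(v) αᵢ`, in Bourbaki's
order of the nodes (0-indexed): node `1`, attached to node `3`, is the Bailey transformation. -/
def baileyRoot : Fin 6 → Fin 8 → ℤ :=
  ![![0, -1, 1, 0, 0, 0, 0, 0],
    ![1, 1, 1, 1, 0, 0, 0, 0],
    ![0, 0, -1, 1, 0, 0, 0, 0],
    ![0, 0, 0, -1, 1, 0, 0, 0],
    ![0, 0, 0, 0, -1, 1, 0, 0],
    ![0, 0, 0, 0, 0, -1, 1, 0]]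

/-- The coefficient vectors of the linear forms `φᵢ` for which the generators act by
`v ↦ v - φᵢ(v) αᵢ`. -/
def baileyCoroot : Fin 6 → Fin 8 → ℤ :=
  ![![0, -1, 1, 0, 0, 0, 0, 0],
    ![-1, 1, 1, 1, 0, 0, 0, -1],
    ![0, 0, -1, 1, 0, 0, 0, 0],
    ![0, 0, 0, -1, 1, 0, 0, 0],
    ![0, 0, 0, 0, -1, 1, 0, 0],
    ![0, 0, 0, 0, 0, -1, 1, 0]]

/-- The realization of type `E₆` on `ℤ⁸` whose simple reflections are the Bailey transformation and
the adjacent transpositions of the coordinates `1, …, 6`. -/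
def baileyRealization : SimplyLacedRealization CoxeterMatrix.E₆ ℤ (Fin 8 → ℤ) where
  root := baileyRoot
  coroot i := dotProductEquiv ℤ (Fin 8) (baileyCoroot i)
  coroot_root_self := by decide +kernel
  coroot_root_of_ne i j h := by
    fin_cases i <;> fin_cases j <;> first | exact absurd rfl h | decide +kernel

/-- Fundamental weights of `baileyRealization`, unique only up to the common kernel of the coroots,
which has rank two. -/
def baileyWeight : Fin 6 → Fin 8 → ℤ :=
  ![![2, 0, 1, 1, 1, 1, 1, 0],
    ![-1, 0, 0, 0, 0, 0, 0, 0],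
    ![1, 0, 0, 1, 1, 1, 1, 0],
    ![0, 0, 0, 0, 1, 1, 1, 0],
    ![0, 0, 0, 0, 0, 1, 1, 0],
    ![0, 0, 0, 0, 0, 0, 1, 0]]

theorem isFundamentalWeights_baileyWeight :
    baileyRealization.IsFundamentalWeights baileyWeight := by
  unfold SimplyLacedRealization.IsFundamentalWeights
  decide +kernel

/-- The matrices `S₁, B, S₂, S₃, S₄, S₅`, in the order of the nodes of the diagram. -/
def baileyGenerator : Fin 6 → Matrix (Fin 8) (Fin 8) ℤ :=
  ![swapMatrix8 1 2,
    !![2,-1,-1,-1,0,0,0,1; 1,0,-1,-1,0,0,0,1; 1,-1,0,-1,0,0,0,1; 1,-1,-1,0,0,0,0,1;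
       0,0,0,0,1,0,0,0; 0,0,0,0,0,1,0,0; 0,0,0,0,0,0,1,0; 0,0,0,0,0,0,0,1],
    swapMatrix8 2 3, swapMatrix8 3 4, swapMatrix8 4 5, swapMatrix8 5 6]

theorem toMatrix'_reflection_eq_baileyGenerator : ∀ i,
    LinearMap.toMatrix' (baileyRealization.reflection i).toLinearMap = baileyGenerator i := by
  decide +kernel

/-- The action of `W(E₆)` on `ℤ⁸`, in matrix form. -/
noncomputable def baileyRep : CoxeterMatrix.E₆.Group →* Matrix (Fin 8) (Fin 8) ℤ :=
  (LinearMap.toMatrixAlgEquiv' : _ ≃ₐ[ℤ] Matrix (Fin 8) (Fin 8) ℤ).toMulEquiv.toMonoidHom.comp <|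
    LinearEquiv.automorphismGroup.toLinearMapMonoidHom.comp <|
      baileyRealization.rep CoxeterMatrix.E₆.toCoxeterSystem

theorem baileyRep_comp_simple :
    baileyRep ∘ CoxeterMatrix.E₆.toCoxeterSystem.simple = baileyGenerator := by
  funext i
  rw [← toMatrix'_reflection_eq_baileyGenerator,
    ← SimplyLacedRealization.rep_simple _ CoxeterMatrix.E₆.toCoxeterSystem]
  rfl

theorem baileyRep_injective : Function.Injective baileyRep :=
  LinearMap.toMatrixAlgEquiv'.injective.comp <| LinearEquiv.toLinearMap_injective.comp <|
    isFundamentalWeights_baileyWeight.rep_injective _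

theorem card_parabolic_A₁ :
    Nat.card (baileyRealization.parabolic ({0} : Finset (Fin 6))) = 2 := by
  rw [← insert_empty_eq, isFundamentalWeights_baileyWeight.card_parabolic_insert_of_orbitSweep
    (l := [0]) (by decide) (by decide) (by decide +kernel), Finset.coe_empty,
    SimplyLacedRealization.parabolic_empty, Subgroup.card_bot]
  decide +kernel

theorem card_parabolic_A₂ :
    Nat.card (baileyRealization.parabolic ({2, 0} : Finset (Fin 6))) = 6 := by
  rw [isFundamentalWeights_baileyWeight.card_parabolic_insert_of_orbitSweep
    (l := [0, 2]) (by decide) (by decide) (by decide +kernel),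
    card_parabolic_A₁]
  decide +kernel

theorem card_parabolic_A₃ :
    Nat.card (baileyRealization.parabolic ({3, 2, 0} : Finset (Fin 6))) = 24 := by
  rw [isFundamentalWeights_baileyWeight.card_parabolic_insert_of_orbitSweep
    (l := [0, 2, 3]) (by decide) (by decide) (by decide +kernel),
    card_parabolic_A₂]
  decide +kernel

theorem card_parabolic_A₄ :
    Nat.card (baileyRealization.parabolic ({1, 3, 2, 0} : Finset (Fin 6))) = 120 := by
  rw [isFundamentalWeights_baileyWeight.card_parabolic_insert_of_orbitSweep
    (l := [0, 2, 3, 1]) (by decide) (by decide) (by decide +kernel),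
    card_parabolic_A₃]
  decide +kernel

theorem card_parabolic_D₅ :
    Nat.card (baileyRealization.parabolic ({4, 1, 3, 2, 0} : Finset (Fin 6))) = 1920 := by
  rw [isFundamentalWeights_baileyWeight.card_parabolic_insert_of_orbitSweep
    (l := [1, 3, 4, 2, 3, 0, 2, 1, 3, 4]) (by decide) (by decide) (by decide +kernel),
    card_parabolic_A₄]
  decide +kernel

theorem card_parabolic_E₆ :
    Nat.card (baileyRealization.parabolic ({5, 4, 1, 3, 2, 0} : Finset (Fin 6))) = 51840 := by
  rw [isFundamentalWeights_baileyWeight.card_parabolic_insert_of_orbitSweep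
    (l := [0, 2, 3, 4, 5, 1, 3, 4, 2, 3, 0, 2, 1, 3, 4, 5])
    (by decide) (by decide) (by decide +kernel),
    card_parabolic_D₅]
  decide +kernel

theorem card_group_E₆ : Nat.card CoxeterMatrix.E₆.Group = 51840 := by
  have huniv : ({5, 4, 1, 3, 2, 0} : Finset (Fin 6)) = Finset.univ := by decide
  rw [isFundamentalWeights_baileyWeight.card_eq_card_parabolic CoxeterMatrix.E₆.toCoxeterSystem,
    ← Finset.coe_univ, ← huniv, card_parabolic_E₆]

end Bailey

/-- The group generated by the Bailey transformation matrix `B` and the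
permutation matrices `S₁, …, S₅` is isomorphic to the Weyl group `W(E₆)`,
of order 51840.  (All generators are involutions, so the submonoid they
generate is a group.) -/
theorem bailey_group_iso_WE6 :
    let B : Matrix (Fin 8) (Fin 8) ℤ :=
      !![2,-1,-1,-1,0,0,0,1; 1,0,-1,-1,0,0,0,1; 1,-1,0,-1,0,0,0,1; 1,-1,-1,0,0,0,0,1;
         0,0,0,0,1,0,0,0; 0,0,0,0,0,1,0,0; 0,0,0,0,0,0,1,0; 0,0,0,0,0,0,0,1]
    let S₁ := swapMatrix8 1 2
    let S₂ := swapMatrix8 2 3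
    let S₃ := swapMatrix8 3 4
    let S₄ := swapMatrix8 4 5
    let S₅ := swapMatrix8 5 6
    let G : Submonoid (Matrix (Fin 8) (Fin 8) ℤ) :=
      Submonoid.closure {B, S₁, S₂, S₃, S₄, S₅}
    Nonempty (G ≃* CoxeterMatrix.E₆.Group) ∧ Nat.card G = 51840 := by
  intro B S₁ S₂ S₃ S₄ S₅ G
  have hG : Submonoid.closure
      (Set.range (baileyRep ∘ CoxeterMatrix.E₆.toCoxeterSystem.simple)) = G := by
    rw [baileyRep_comp_simple, baileyGenerator]
    simp only [Matrix.range_cons, Matrix.range_empty, Set.union_empty, Set.singleton_union]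
    rw [Set.insert_comm]
  obtain ⟨e⟩ := nonempty_closure_range_simple_mulEquiv CoxeterMatrix.E₆.toCoxeterSystem
    baileyRep_injective
  rw [hG] at e
  exact ⟨⟨e⟩, (Nat.card_congr e.toEquiv).trans card_group_E₆⟩
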